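/- Let n ≥ 1 be an integer and let 0 < p < ∞. Then 2ⁿ·(1+np)^{1/p}·n! ≤ C(n,p) ≤ (2e)ⁿ·n!. Equivalently, (2e)^{−n} ≤ D**(n,p,[0,1]) ≤ 2^{−n}·(1+np)^{−1/p}. -/

import Mathlib

open Set Polynomial Nat MeasureTheory ENNReal

/-- `fd 0` belongs to `𝒟ⁿ([a,b])`, with `fd k` its `k`-th derivative: `fd k` exists and is
continuous on `[a,b]` for `0 ≤ k ≤ n-1`, and `fd n` is the derivative of `fd (n-1)` on `(a,b)`. -/
def IsDn (n : ℕ) (a b : ℝ) (fd : ℕ → ℝ → ℝ) : Prop :=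
  (∀ k, k + 1 < n → ∀ x ∈ Set.Icc a b, HasDerivWithinAt (fd k) (fd (k + 1) x) (Set.Icc a b) x) ∧
  ContinuousOn (fd (n - 1)) (Set.Icc a b) ∧
  (∀ x ∈ Set.Ioo a b, HasDerivAt (fd (n - 1)) (fd n x) x)

/-- `m_n(f) = inf_{a<t<b} |f^{(n)}(t)|`. -/
noncomputable def mIoo (n : ℕ) (a b : ℝ) (fd : ℕ → ℝ → ℝ) : ℝ :=
  sInf ((fun t => |fd n t|) '' Set.Ioo a b)

/-- `‖f‖_{p,[a,b]}` for `0 < p < ∞`. -/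
noncomputable def Lp (p a b : ℝ) (f : ℝ → ℝ) : ℝ :=
  (∫ t in a..b, |f t| ^ p) ^ (1 / p)

/-- `‖f‖_{∞,[a,b]}`. -/
noncomputable def Lsup (a b : ℝ) (f : ℝ → ℝ) : ℝ :=
  sSup ((fun t => |f t|) '' Set.Icc a b)

/-- `‖f‖_{p,[a,b]}` for `0 < p ≤ ∞`. -/
noncomputable def pnorm (p : ℝ≥0∞) (a b : ℝ) (f : ℝ → ℝ) : ℝ :=
  if p = ⊤ then Lsup a b f else Lp p.toReal a b f

/-- `D**(n,p,[a,b])`, `p` finite. -/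
noncomputable def Dstar (n : ℕ) (p a b : ℝ) : ℝ :=
  sInf { c | ∃ Q : Polynomial ℝ, Q.Monic ∧ Q.natDegree = n ∧ c = Lp p a b (fun x => Q.eval x) }

/-- `D**(n,∞,[a,b])`. -/
noncomputable def DstarInf (n : ℕ) (a b : ℝ) : ℝ :=
  sInf { c | ∃ Q : Polynomial ℝ, Q.Monic ∧ Q.natDegree = n ∧ c = Lsup a b (fun x => Q.eval x) }

/-- `C(n,p)`, `p` finite. -/
noncomputable def Cnp (n : ℕ) (p : ℝ) : ℝ :=
  sSup { c | ∃ fd : ℕ → ℝ → ℝ, IsDn n 0 1 fd ∧ (∃ x ∈ Set.Icc (0:ℝ) 1, fd 0 x ≠ 0) ∧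
    c = mIoo n 0 1 fd / Lp p 0 1 (fd 0) }

/-- `C(n,∞)`. -/
noncomputable def CnpInf (n : ℕ) : ℝ :=
  sSup { c | ∃ fd : ℕ → ℝ → ℝ, IsDn n 0 1 fd ∧ (∃ x ∈ Set.Icc (0:ℝ) 1, fd 0 x ≠ 0) ∧
    c = mIoo n 0 1 fd / Lsup 0 1 (fd 0) }


lemma bern_deriv (N : ℕ) (a : ℕ → ℝ) :
    derivative (∑ k ∈ Finset.range (N + 2), C (a k) * bernsteinPolynomial ℝ (N + 1) k) =
      ((N + 1 : ℕ) : ℝ[X]) * ∑ k ∈ Finset.range (N + 1),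
        C (a (k + 1) - a k) * bernsteinPolynomial ℝ N k := by
  have h1 : ∑ k ∈ Finset.range (N + 1), C (a (k + 1)) * bernsteinPolynomial ℝ N (k + 1)
      + C (a 0) * bernsteinPolynomial ℝ N 0
      = ∑ k ∈ Finset.range (N + 1), C (a k) * bernsteinPolynomial ℝ N k := by
    rw [← Finset.sum_range_succ' (fun k => C (a k) * bernsteinPolynomial ℝ N k),
      Finset.sum_range_succ, bernsteinPolynomial.eq_zero_of_lt ℝ (Nat.lt_succ_self N)]
    simp
  rw [Finset.sum_range_succ', derivative_add, derivative_sum]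
  simp only [derivative_C_mul, bernsteinPolynomial.derivative_succ,
    bernsteinPolynomial.derivative_zero, Nat.add_sub_cancel, C_sub, sub_mul,
    Finset.sum_sub_distrib]
  rw [← h1]
  have : ∀ x, C (a (x + 1)) * (((N + 1 : ℕ) : ℝ[X]) *
      (bernsteinPolynomial ℝ N x - bernsteinPolynomial ℝ N (x + 1))) =
      ((N + 1 : ℕ) : ℝ[X]) * (C (a (x + 1)) * bernsteinPolynomial ℝ N x) -
      ((N + 1 : ℕ) : ℝ[X]) * (C (a (x + 1)) * bernsteinPolynomial ℝ N (x + 1)) := by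
    intro x; ring
  simp only [this, Finset.sum_sub_distrib, ← Finset.mul_sum]
  ring

lemma approx_one (h : ℝ → ℝ) (hc : ContinuousOn h (Icc 0 1)) (m : ℝ)
    (hm : ∀ x ∈ Icc (0:ℝ) 1, ∀ y ∈ Icc (0:ℝ) 1, x ≤ y → m * (y - x) ≤ h y - h x)
    (ε : ℝ) (hε : 0 < ε) :
    ∃ P : ℝ[X], (∀ x ∈ Icc (0:ℝ) 1, |h x - P.eval x| ≤ ε) ∧
      ∀ x ∈ Icc (0:ℝ) 1, m ≤ (derivative P).eval x := by
  let f : C(unitInterval, ℝ) := ⟨fun x => h x, hc.comp_continuous continuous_subtype_val (fun x => x.2)⟩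
  have ht := (bernsteinApproximation_uniform f).comp (Filter.tendsto_add_atTop_nat 1)
  rw [Metric.tendsto_atTop] at ht
  obtain ⟨N, hN⟩ := ht ε hε
  specialize hN N le_rfl
  let a : ℕ → ℝ := fun k => h ((k : ℝ) / ((N + 1 : ℕ) : ℝ))
  refine ⟨∑ k ∈ Finset.range (N + 2), C (a k) * bernsteinPolynomial ℝ (N + 1) k, ?_, ?_⟩
  · intro x hx
    have h2 := (ContinuousMap.dist_apply_le_dist (f := bernsteinApproximation (N+1) f) (g := f) ⟨x, hx⟩).trans hN.le
    rw [Real.dist_eq, abs_sub_comm] at h2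
    have h3 : eval x (∑ k ∈ Finset.range (N + 2), C (a k) * bernsteinPolynomial ℝ (N + 1) k) =
        bernsteinApproximation (N + 1) f ⟨x, hx⟩ := ?_
    · rw [h3]; exact h2
    rw [bernsteinApproximation.apply, eval_finsetSum, Finset.sum_range]
    refine Finset.sum_congr rfl fun k _ => ?_
    simp [bernstein, f, a, bernstein.z, mul_comm]
  · intro x hx
    rw [bern_deriv, eval_mul, eval_finsetSum, eval_natCast]
    have hs := congrArg (eval x) (bernsteinPolynomial.sum ℝ N)
    rw [eval_finsetSum, eval_one] at hs
    have hNp : (0:ℝ) < ((N + 1 : ℕ) : ℝ) := by positivity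
    have : m / ((N + 1 : ℕ) : ℝ) ≤ ∑ k ∈ Finset.range (N + 1),
        eval x (C (a (k + 1) - a k) * bernsteinPolynomial ℝ N k) := by
      rw [← mul_one (m / _), ← hs, Finset.mul_sum]
      refine Finset.sum_le_sum fun k hk => ?_
      rw [eval_mul, eval_C]
      have hk' : (k : ℝ) + 1 ≤ ((N + 1 : ℕ) : ℝ) := by
        have := Finset.mem_range.1 hk
        exact_mod_cast this
      refine mul_le_mul_of_nonneg_right ?_ ?_
      · have := hm ((k : ℝ) / ((N + 1 : ℕ) : ℝ)) ⟨by positivity, by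
            rw [div_le_one hNp]; linarith⟩ (((k + 1 : ℕ) : ℝ) / ((N + 1 : ℕ) : ℝ))
            ⟨by positivity, by rw [div_le_one hNp]; push_cast at *; linarith⟩
            (by gcongr; simp)
        refine le_trans (le_of_eq ?_) this
        push_cast
        field_simp
        ring
      · have := hx.1
        have h1 : 0 ≤ 1 - x := by linarith [hx.2]
        simp [bernsteinPolynomial]
        positivity
    rw [div_le_iff₀' hNp] at this
    exact this

lemma exists_antideriv (q : ℝ[X]) (c : ℝ) : ∃ P : ℝ[X], derivative P = q ∧ P.eval 0 = c := by
  refine ⟨C c + ∑ i ∈ Finset.range (q.natDegree + 1), C (q.coeff i / (i + 1)) * X ^ (i + 1), ?_, ?_⟩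
  · conv_rhs => rw [q.as_sum_range_C_mul_X_pow]
    rw [derivative_add, derivative_C, zero_add, derivative_sum]
    refine Finset.sum_congr rfl fun i _ => ?_
    rw [derivative_C_mul_X_pow]
    have : (i : ℝ) + 1 ≠ 0 := by positivity
    push_cast
    simp [div_mul_cancel₀ _ this]
  · simp [eval_finsetSum]

lemma approx_n (n : ℕ) : ∀ (fd : ℕ → ℝ → ℝ) (m : ℝ), 
    (∀ k, k < n → ∀ x ∈ Icc (0:ℝ) 1, HasDerivWithinAt (fd k) (fd (k + 1) x) (Icc 0 1) x) → 
    ContinuousOn (fd n) (Icc 0 1) →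
    (∀ x ∈ Icc (0:ℝ) 1, ∀ y ∈ Icc (0:ℝ) 1, x ≤ y → m * (y - x) ≤ fd n y - fd n x) →
    ∀ ε : ℝ, 0 < ε →
    ∃ P : ℝ[X], (∀ x ∈ Icc (0:ℝ) 1, |fd 0 x - P.eval x| ≤ ε) ∧
      ∀ x ∈ Icc (0:ℝ) 1, m ≤ (derivative^[n + 1] P).eval x := by
  induction n with
  | zero =>
    intro fd m _ hc hm ε hε
    exact approx_one (fd 0) hc m hm ε hε
  | succ n ih =>
    intro fd m hd hc hm ε hε
    obtain ⟨q, hq1, hq2⟩ := ih (fun k => fd (k + 1)) m (fun k hk => hd (k + 1) (by omega)) hc hm ε hε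
    obtain ⟨P, hP1, hP2⟩ := exists_antideriv q (fd 0 0)
    refine ⟨P, ?_, ?_⟩
    · intro x hx
      have := Convex.norm_image_sub_le_of_norm_hasDerivWithin_le (f := fun x => fd 0 x - P.eval x)
        (f' := fun x => fd 1 x - q.eval x) (s := Icc (0:ℝ) 1) (C := ε) (x := 0) (y := x)
        (fun y hy => by
          have := (hd 0 (by omega) y hy).sub (P.hasDerivWithinAt y (Icc 0 1))
          rw [hP1] at this
          exact this) (fun y hy => hq1 y hy) (convex_Icc 0 1) (by simp) hx
      simp only [hP2, sub_self, sub_zero, Real.norm_eq_abs] at this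
      refine this.trans ?_
      rw [abs_of_nonneg hx.1]
      nlinarith [hx.2]
    · rw [Function.iterate_succ_apply, hP1]
      exact hq2

lemma poly_lower (n : ℕ) : ∀ (P : ℝ[X]) (c : ℝ), 
    (∀ x ∈ Icc (0:ℝ) 1, (n ! : ℝ) * c ≤ (derivative^[n] P).eval x) → 0 ≤ c →
    ∃ z : Fin n → ℝ, (∀ i, z i ∈ Icc (0:ℝ) 1) ∧ ∀ x ∈ Icc (0:ℝ) 1, c * ∏ i, |x - z i| ≤ |P.eval x| := by
  induction n with
  | zero =>
    intro P c h hc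
    refine ⟨fun _ => 0, fun i => i.elim0, fun x hx => ?_⟩
    have := h x hx
    simp at this ⊢
    exact this.trans (le_abs_self _)
  | succ n ih =>
    intro P c h hc
    obtain ⟨z, hz, hzm⟩ := isCompact_Icc.exists_isMinOn (s := Icc (0:ℝ) 1) ⟨0, by simp⟩
      (f := fun x => |P.eval x|) (by fun_prop)
    have hzm' : ∀ x ∈ Icc (0:ℝ) 1, |P.eval z| ≤ |P.eval x| := fun x hx => hzm hx
    have key : ∀ x ∈ Icc (0:ℝ) 1, |P.eval x - P.eval z| ≤ |P.eval x| := by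
      intro x hx
      by_cases h0 : P.eval z = 0
      · simp [h0]
      have hprod : 0 ≤ P.eval x * P.eval z := by
        by_contra hneg
        push Not at hneg
        have hcon : ContinuousOn (fun x => P.eval x) (uIcc x z) := by fun_prop
        have h0m : (0:ℝ) ∈ uIcc (P.eval x) (P.eval z) := by
          rw [mem_uIcc]
          rcases mul_neg_iff.1 hneg with h | h
          · right; exact ⟨h.2.le, h.1.le⟩
          · left; exact ⟨h.1.le, h.2.le⟩
        obtain ⟨w, hw, hw0⟩ := intermediate_value_uIcc hcon h0m
        have := hzm' w ((convex_Icc (0:ℝ) 1).ordConnected.uIcc_subset hx hz hw)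
        simp only at hw0
        rw [hw0, abs_zero] at this
        exact h0 (abs_nonpos_iff.1 this)
      have h3 := hzm' x hx
      rw [← sq_le_sq]
      have h4 : P.eval z ^ 2 ≤ P.eval x * P.eval z := by
        rw [← abs_of_nonneg hprod, abs_mul, ← sq_abs, sq]
        exact mul_le_mul_of_nonneg_right h3 (abs_nonneg _)
      nlinarith
    obtain ⟨g, hg⟩ := dvd_iff_isRoot.2 (show (P - C (P.eval z)).IsRoot z by simp)
    have hleib : ∀ k, derivative^[k + 1] ((X - C z) * g) =
        (X - C z) * derivative^[k + 1] g + ((k + 1 : ℕ) : ℝ[X]) * derivative^[k] g := by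
      intro k
      induction k with
      | zero => simp; ring
      | succ k ihk =>
        rw [Function.iterate_succ_apply', ihk]
        simp only [derivative_add, derivative_mul, derivative_sub, derivative_X, derivative_C,
          derivative_natCast, ← Function.iterate_succ_apply' (f := derivative)]
        push_cast; ring
    have hPg : derivative^[n + 1] P = (X - C z) * derivative^[n + 1] g + ((n + 1 : ℕ) : ℝ[X]) * derivative^[n] g := by
      rw [← hleib, ← hg, Function.iterate_succ_apply, Function.iterate_succ_apply]
      simp
    have hgb : ∀ x ∈ Icc (0:ℝ) 1, (n ! : ℝ) * c ≤ (derivative^[n] g).eval x := by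
      set G := derivative^[n] g with hG
      obtain ⟨t, ht, htm⟩ := isCompact_Icc.exists_isMinOn (s := Icc (0:ℝ) 1) ⟨0, by simp⟩
        (f := fun x => G.eval x) (by fun_prop)
      intro x hx
      refine le_trans ?_ (htm hx)
      have hfo : 0 ≤ (derivative G).eval t * (z - t) := by
        have := (htm.localize).hasFDerivWithinAt_nonneg (G.hasDerivWithinAt t (Icc 0 1)).hasFDerivWithinAt
          (y := z - t) (sub_mem_posTangentConeAt_of_segment_subset ((convex_Icc (0:ℝ) 1).segment_subset ht hz))
        simpa [mul_comm] using this
      have h1 := h t ht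
      rw [hPg, Function.iterate_succ_apply', ← hG] at h1
      simp only [eval_add, eval_mul, eval_sub, eval_X, eval_C, eval_natCast] at h1
      rw [Nat.factorial_succ] at h1
      push_cast at h1
      have h5 : ((n:ℝ) + 1) * (n ! * c) ≤ ((n:ℝ) + 1) * G.eval t := by nlinarith
      exact le_of_mul_le_mul_left h5 (by positivity)
    obtain ⟨w, hw, hwb⟩ := ih g c hgb hc
    refine ⟨Fin.cons z w, ?_, ?_⟩
    · intro i
      refine Fin.cases ?_ ?_ i
      · simpa using hz
      · intro j; simpa using hw j
    · intro x hx
      rw [Fin.prod_univ_succ]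
      simp only [Fin.cons_zero, Fin.cons_succ]
      refine le_trans ?_ (key x hx)
      have := congrArg (eval x) hg
      simp only [eval_sub, eval_C, eval_mul, eval_X] at this
      rw [this, abs_mul]
      have := mul_le_mul_of_nonneg_left (hwb x hx) (abs_nonneg (x - z))
      linarith

lemma int_log (z : ℝ) : -(1 + Real.log 2) ≤ ∫ x in (0:ℝ)..1, Real.log (x - z) := by
  rw [intervalIntegral.integral_comp_sub_right (fun x => Real.log x), integral_log]
  have := Real.binEntropy_le_log_two (p := z)
  rw [Real.binEntropy_eq_negMulLog_add_negMulLog_one_sub, Real.negMulLog, Real.negMulLog] at this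
  simp only [zero_sub, Real.log_neg_eq_log]
  linarith

lemma int_lower (n : ℕ) (z : Fin n → ℝ) (p : ℝ) (hp : 0 < p) :
    ((2 * Real.exp 1) ^ n)⁻¹ ^ p ≤ ∫ x in (0:ℝ)..1, (∏ i, |x - z i|) ^ p := by
  have hint : ∀ i, IntervalIntegrable (fun x => Real.log (x - z i)) volume 0 1 := by
    intro i
    have := (intervalIntegral.intervalIntegrable_log' (a := 0 - z i) (b := 1 - z i)).comp_sub_right (z i)
    simpa using this
  set u : ℝ → ℝ := fun x => p * ∑ i, Real.log (x - z i) with hu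
  have huint : IntervalIntegrable u volume 0 1 :=
    (IntervalIntegrable.sum Finset.univ (fun i _ => hint i)).const_mul p |>.congr (by
      intro x _
      simp [hu])
  set a := ∫ x in (0:ℝ)..1, u x with ha
  have hale : -(p * (n * (1 + Real.log 2))) ≤ a := by
    rw [ha, hu, intervalIntegral.integral_const_mul, intervalIntegral.integral_finsetSum (fun i _ => hint i)]
    have := Finset.sum_le_sum (s := Finset.univ) (fun i (_ : i ∈ Finset.univ) => int_log (z i))
    simp only [Finset.sum_const, Finset.card_univ, Fintype.card_fin, nsmul_eq_mul] at this
    nlinarith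
  have h1 : ((2 * Real.exp 1) ^ n)⁻¹ ^ p ≤ Real.exp a := by
    refine le_trans (le_of_eq ?_) (Real.exp_le_exp.2 hale)
    rw [Real.rpow_def_of_pos (by positivity), Real.log_inv, Real.log_pow, Real.log_mul (by norm_num) (by positivity), Real.log_exp]
    congr 1; ring
  refine h1.trans ?_
  have h2 : ∫ x in (0:ℝ)..1, Real.exp a * (1 + (u x - a)) = Real.exp a := by
    rw [intervalIntegral.integral_const_mul, intervalIntegral.integral_add (by simp) (huint.sub (by simp)), intervalIntegral.integral_sub huint (by simp)]
    simp [← ha]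
  rw [← h2]
  have hcont : Continuous fun x : ℝ => (∏ i, |x - z i|) ^ p :=
    Continuous.rpow_const (by fun_prop) (fun x => Or.inr hp.le)
  refine intervalIntegral.integral_mono_ae (by norm_num) ?_ (hcont.intervalIntegrable _ _) ?_
  · exact (IntervalIntegrable.add (by simp) (huint.sub (by simp))).const_mul _
  · have hfin : (Set.range z).Finite := Set.finite_range z
    have hae : ∀ᵐ x : ℝ, x ∉ Set.range z := by
      rw [ae_iff]; simpa using! hfin.measure_zero volume
    filter_upwards [hae] with x hx
    have hpos : ∀ i, 0 < |x - z i| := fun i => abs_pos.2 (sub_ne_zero.2 fun h => hx ⟨i, h.symm⟩)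
    have : (∏ i, |x - z i|) ^ p = Real.exp a * Real.exp (u x - a) := by
      rw [Real.rpow_def_of_pos (Finset.prod_pos fun i _ => hpos i), Real.log_prod (fun i _ => (hpos i).ne'), ← Real.exp_add]
      simp only [hu, Real.log_abs]
      congr 1; ring
    rw [this]
    refine mul_le_mul_of_nonneg_left ?_ (Real.exp_pos _).le
    linarith [Real.add_one_le_exp (u x - a)]

lemma core (n : ℕ) (hn : 1 ≤ n) (p : ℝ) (hp : 0 < p) (fd : ℕ → ℝ → ℝ) (hf : IsDn n 0 1 fd)
    (m : ℝ) (hm : 0 < m) (hb : ∀ x ∈ Ioo (0:ℝ) 1, m ≤ fd n x) :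
    ContinuousOn (fd 0) (Icc 0 1) ∧
    (m / n ! * ((2 * Real.exp 1) ^ n)⁻¹) ^ p ≤ ∫ x in (0:ℝ)..1, |fd 0 x| ^ p := by
  obtain ⟨N, rfl⟩ : ∃ N, n = N + 1 := ⟨n - 1, by omega⟩
  obtain ⟨h1, h2, h3⟩ := hf
  simp only [Nat.add_sub_cancel] at h2 h3
  have hcont : ContinuousOn (fd 0) (Icc 0 1) := by
    rcases Nat.eq_zero_or_pos N with h | h
    · subst h; exact h2
    · exact fun x hx => (h1 0 (by omega) x hx).continuousWithinAt
  refine ⟨hcont, ?_⟩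
  have hinc : ∀ x ∈ Icc (0:ℝ) 1, ∀ y ∈ Icc (0:ℝ) 1, x ≤ y → m * (y - x) ≤ fd N y - fd N x := by
    refine (convex_Icc (0:ℝ) 1).mul_sub_le_image_sub_of_le_deriv h2 ?_ ?_
    · rw [interior_Icc]
      exact fun x hx => (h3 x hx).differentiableAt.differentiableWithinAt
    · rw [interior_Icc]
      exact fun x hx => by rw [(h3 x hx).deriv]; exact hb x hx
  have happ := approx_n N fd m (fun k hk => h1 k (by omega)) h2 hinc
  choose P hP1 hP2 using fun k : ℕ => happ (1 / ((k : ℝ) + 1)) (by positivity)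
  have hlow : ∀ k, (m / (N + 1)! * ((2 * Real.exp 1) ^ (N + 1))⁻¹) ^ p ≤
      ∫ x in (0:ℝ)..1, |(P k).eval x| ^ p := by
    intro k
    have hf0 : (0:ℝ) < (N + 1)! := by positivity
    obtain ⟨z, -, hz⟩ := poly_lower (N + 1) (P k) (m / (N + 1)!) (by
      intro x hx
      rw [mul_div_cancel₀ _ hf0.ne']
      exact hP2 k x hx) (by positivity)
    have hl := int_lower (N + 1) z p hp
    rw [Real.mul_rpow (by positivity) (by positivity)]
    refine (mul_le_mul_of_nonneg_left hl (by positivity)).trans ?_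
    rw [← intervalIntegral.integral_const_mul]
    refine intervalIntegral.integral_mono_on (by norm_num) ?_ ?_ ?_
    · exact (continuous_const.mul (Continuous.rpow_const (by fun_prop) (fun x => Or.inr hp.le))).intervalIntegrable _ _
    · exact (Continuous.rpow_const (by fun_prop) (fun x => Or.inr hp.le)).intervalIntegrable _ _
    · intro x hx
      rw [← Real.mul_rpow (by positivity) (by positivity)]
      exact Real.rpow_le_rpow (by positivity) (hz x hx) hp.le
  obtain ⟨M, hM⟩ := isCompact_Icc.exists_bound_of_continuousOn hcont
  have hsub : Set.uIoc (0:ℝ) 1 ⊆ Icc 0 1 := by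
    rw [uIoc_of_le (by norm_num)]; exact Ioc_subset_Icc_self
  refine ge_of_tendsto' (f := fun k => ∫ x in (0:ℝ)..1, |(P k).eval x| ^ p) (x := Filter.atTop) ?_ hlow
  refine intervalIntegral.tendsto_integral_filter_of_dominated_convergence
    (fun _ => (M + 1) ^ p) ?_ ?_ (by simp) ?_
  · refine Filter.Eventually.of_forall fun k => ?_
    exact (Continuous.rpow_const (by fun_prop) (fun x => Or.inr hp.le)).aestronglyMeasurable
  · refine Filter.Eventually.of_forall fun k => Filter.Eventually.of_forall fun x hx => ?_
    rw [Real.norm_of_nonneg (by positivity)]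
    refine Real.rpow_le_rpow (abs_nonneg _) ?_ hp.le
    have e1 := hP1 k x (hsub hx)
    have e2 := hM x (hsub hx)
    rw [Real.norm_eq_abs] at e2
    have e3 : 1 / ((k:ℝ) + 1) ≤ 1 := by
      rw [div_le_one (by positivity)]; linarith [(Nat.cast_nonneg k : (0:ℝ) ≤ k)]
    have e4 := abs_sub_abs_le_abs_sub ((P k).eval x) (fd 0 x)
    rw [abs_sub_comm] at e4
    linarith
  · refine Filter.Eventually.of_forall fun x hx => ?_
    have ht : Filter.Tendsto (fun k => (P k).eval x) Filter.atTop (nhds (fd 0 x)) := by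
      rw [tendsto_iff_dist_tendsto_zero]
      refine squeeze_zero (fun _ => dist_nonneg) (fun k => ?_) tendsto_one_div_add_atTop_nhds_zero_nat
      rw [Real.dist_eq, abs_sub_comm]
      exact hP1 k x (hsub hx)
    exact ht.abs.rpow_const (Or.inr hp.le)

lemma mIoo_nonneg (n : ℕ) (fd : ℕ → ℝ → ℝ) : 0 ≤ mIoo n 0 1 fd := by
  apply Real.sInf_nonneg
  rintro _ ⟨x, _, rfl⟩
  exact abs_nonneg _

lemma Lp_lower (n : ℕ) (hn : 1 ≤ n) (p : ℝ) (hp : 0 < p) (fd : ℕ → ℝ → ℝ) (hf : IsDn n 0 1 fd)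
    (hm : 0 < mIoo n 0 1 fd) :
    mIoo n 0 1 fd / n ! * ((2 * Real.exp 1) ^ n)⁻¹ ≤ Lp p 0 1 (fd 0) := by
  set m := mIoo n 0 1 fd with hmdef
  have hmle : ∀ x ∈ Ioo (0:ℝ) 1, m ≤ |fd n x| := fun x hx =>
    csInf_le ⟨0, by rintro _ ⟨x, _, rfl⟩; exact abs_nonneg _⟩ ⟨x, hx, rfl⟩
  have hmain : (m / n ! * ((2 * Real.exp 1) ^ n)⁻¹) ^ p ≤ ∫ x in (0:ℝ)..1, |fd 0 x| ^ p := by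
    rcases hasDerivWithinAt_forall_lt_or_forall_gt_of_forall_ne (convex_Ioo (0:ℝ) 1)
      (fun x hx => (hf.2.2 x hx).hasDerivWithinAt) (m := 0) (fun x hx h0 => by
        have := hmle x hx
        rw [h0, abs_zero] at this
        linarith) with hs | hs
    · have := (core n hn p hp (fun k x => - fd k x) ⟨fun k hk x hx => (hf.1 k hk x hx).neg,
        hf.2.1.neg, fun x hx => (hf.2.2 x hx).neg⟩ m hm (fun x hx => by
          have := hmle x hx
          rwa [abs_of_neg (hs x hx)] at this)).2
      simpa only [abs_neg] using this
    · exact (core n hn p hp fd hf m hm (fun x hx => by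
          have := hmle x hx
          rwa [abs_of_pos (hs x hx)] at this)).2
  have := Real.rpow_le_rpow (by positivity) hmain (z := 1 / p) (by positivity)
  rwa [← Real.rpow_mul (by positivity), mul_one_div_cancel hp.ne', Real.rpow_one] at this

lemma ratio_le (n : ℕ) (hn : 1 ≤ n) (p : ℝ) (hp : 0 < p) (fd : ℕ → ℝ → ℝ) (hf : IsDn n 0 1 fd) :
    mIoo n 0 1 fd / Lp p 0 1 (fd 0) ≤ (2 * Real.exp 1) ^ n * (n ! : ℝ) := by
  rcases (mIoo_nonneg n fd).eq_or_lt with h | h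
  · rw [← h, zero_div]; positivity
  · have h1 := Lp_lower n hn p hp fd hf h
    have hK : (0:ℝ) < (2 * Real.exp 1) ^ n := by positivity
    have hF : (0:ℝ) < n ! := by positivity
    have hpos : 0 < Lp p 0 1 (fd 0) := lt_of_lt_of_le (by positivity) h1
    rw [div_le_iff₀ hpos]
    calc mIoo n 0 1 fd = (2 * Real.exp 1) ^ n * n ! * (mIoo n 0 1 fd / n ! * ((2 * Real.exp 1) ^ n)⁻¹) := by
          field_simp
      _ ≤ _ := mul_le_mul_of_nonneg_left h1 (by positivity)

lemma poly_isDn (n : ℕ) (hn : 1 ≤ n) (Q : ℝ[X]) :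
    IsDn n 0 1 (fun k x => (derivative^[k] Q).eval x) := by
  refine ⟨fun k _ x _ => ?_, by fun_prop, fun x _ => ?_⟩
  · simp only [Function.iterate_succ_apply']
    exact (derivative^[k] Q).hasDerivWithinAt x _
  · obtain ⟨N, rfl⟩ : ∃ N, n = N + 1 := ⟨n - 1, by omega⟩
    simp only [Function.iterate_succ_apply', Nat.add_sub_cancel]
    exact (derivative^[N] Q).hasDerivAt x

lemma poly_mIoo (n : ℕ) (Q : ℝ[X]) (hQ : Q.Monic) (hd : Q.natDegree = n) :
    mIoo n 0 1 (fun k x => (derivative^[k] Q).eval x) = n ! := by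
  have h : derivative^[n] Q = C (n ! : ℝ) := by
    have h1 : (derivative^[n] Q).natDegree = 0 := by
      have := natDegree_iterate_derivative Q n
      omega
    rw [eq_C_of_natDegree_eq_zero h1, coeff_iterate_derivative]
    have : Q.coeff n = 1 := by rw [← hd]; exact hQ
    simp [this, Nat.descFactorial_self]
  unfold mIoo
  simp only [h, eval_C]
  rw [Set.Nonempty.image_const (nonempty_Ioo.2 (by norm_num)), csInf_singleton, abs_of_nonneg (by positivity)]

lemma Lp_half (n : ℕ) (p : ℝ) (hp : 0 < p) :
    Lp p 0 1 (fun x => ((X - C (1/2 : ℝ)) ^ n).eval x) = (2:ℝ) ^ (-(n:ℤ)) * (1 + n * p) ^ (-(1 / p)) := by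
  have hq : 0 ≤ (n:ℝ) * p := by positivity
  have hcont : Continuous fun x : ℝ => |x| ^ ((n:ℝ) * p) :=
    Continuous.rpow_const (by fun_prop) (fun x => Or.inr hq)
  have hpos : ∫ x in (0:ℝ)..(1/2), |x| ^ ((n:ℝ) * p) = (1/2) ^ (n * p + 1) / (n * p + 1) := by
    rw [intervalIntegral.integral_congr (g := fun x => x ^ ((n:ℝ) * p)), integral_rpow (Or.inl (by linarith))]
    · rw [Real.zero_rpow (by positivity), sub_zero]
    · intro x hx
      rw [uIcc_of_le (by norm_num)] at hx
      simp only [abs_of_nonneg hx.1]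
  have hneg : ∫ x in (-(1/2):ℝ)..0, |x| ^ ((n:ℝ) * p) = (1/2) ^ (n * p + 1) / (n * p + 1) := by
    rw [← hpos]
    have := intervalIntegral.integral_comp_neg (a := 0) (b := 1/2) (fun x : ℝ => |x| ^ ((n:ℝ) * p))
    simp only [abs_neg, neg_zero] at this
    exact this.symm
  have hI : ∫ x in (0:ℝ)..1, |((X - C (1/2 : ℝ)) ^ n).eval x| ^ p = ((1/2) ^ n) ^ p * (1 + n * p)⁻¹ := by
    have e : ∀ x : ℝ, |((X - C (1/2 : ℝ)) ^ n).eval x| ^ p = |x - 1/2| ^ ((n:ℝ) * p) := by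
      intro x
      rw [eval_pow, eval_sub, eval_X, eval_C, abs_pow, Real.rpow_mul (abs_nonneg _), Real.rpow_natCast]
    simp only [e]
    rw [intervalIntegral.integral_comp_sub_right (fun x => |x| ^ ((n:ℝ) * p)),
      show (0:ℝ) - 1/2 = -(1/2) by norm_num, show (1:ℝ) - 1/2 = 1/2 by norm_num,
      ← intervalIntegral.integral_add_adjacent_intervals (b := 0)
        (hcont.intervalIntegrable _ _) (hcont.intervalIntegrable _ _), hpos, hneg,
      Real.rpow_add (by norm_num), Real.rpow_one, Real.rpow_mul (by norm_num), Real.rpow_natCast,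
      add_comm (1:ℝ)]
    field_simp
    ring
  unfold _root_.Lp
  rw [hI, Real.mul_rpow (by positivity) (by positivity), ← Real.rpow_mul (by positivity),
    mul_one_div_cancel hp.ne', Real.rpow_one, Real.rpow_neg (by positivity), Real.inv_rpow (by positivity)]
  simp

/-- For `0 < p < ∞`, `2ⁿ(1+np)^{1/p} n! ≤ C(n,p) ≤ (2e)ⁿ n!`; equivalently,
`(2e)^{-n} ≤ D**(n,p,[0,1]) ≤ 2^{-n}(1+np)^{-1/p}`. -/
theorem stmt16 (n : ℕ) (hn : 1 ≤ n) (p : ℝ) (hp : 0 < p) :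
    (2 ^ n * (1 + n * p) ^ (1 / p) * (n ! : ℝ) ≤ Cnp n p ∧
      Cnp n p ≤ (2 * Real.exp 1) ^ n * (n ! : ℝ)) ∧
    ((2 * Real.exp 1) ^ (-(n:ℤ)) ≤ Dstar n p 0 1 ∧
      Dstar n p 0 1 ≤ (2:ℝ) ^ (-(n:ℤ)) * (1 + n * p) ^ (-(1 / p))) := by
  have hK : (0:ℝ) < (2 * Real.exp 1) ^ n := by positivity
  have hF : (0:ℝ) < n ! := by positivity
  have hB : (0:ℝ) < (1 + n * p) ^ (1 / p) := by positivity
  have hmonic : ((X - C (1/2 : ℝ)) ^ n).Monic := (monic_X_sub_C _).pow n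
  have hdeg : ((X - C (1/2 : ℝ)) ^ n).natDegree = n := by
    rw [(monic_X_sub_C _).natDegree_pow, natDegree_X_sub_C, mul_one]
  have hmem : (2 ^ n * (1 + n * p) ^ (1 / p) * (n ! : ℝ)) ∈
      { c | ∃ fd : ℕ → ℝ → ℝ, IsDn n 0 1 fd ∧ (∃ x ∈ Set.Icc (0:ℝ) 1, fd 0 x ≠ 0) ∧
        c = mIoo n 0 1 fd / Lp p 0 1 (fd 0) } := by
    refine ⟨_, poly_isDn n hn ((X - C (1/2 : ℝ)) ^ n), ⟨0, by simp, by simp⟩, ?_⟩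
    rw [poly_mIoo n _ hmonic hdeg]
    simp only [Function.iterate_zero, id]
    rw [Lp_half n p hp, Real.rpow_neg (by positivity)]
    simp only [zpow_neg, zpow_natCast]
    field_simp
  have hup : ∀ c ∈ { c | ∃ fd : ℕ → ℝ → ℝ, IsDn n 0 1 fd ∧
      (∃ x ∈ Set.Icc (0:ℝ) 1, fd 0 x ≠ 0) ∧ c = mIoo n 0 1 fd / Lp p 0 1 (fd 0) },
      c ≤ (2 * Real.exp 1) ^ n * (n ! : ℝ) := by
    rintro c ⟨fd, hfd, -, rfl⟩
    exact ratio_le n hn p hp fd hfd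
  have hlo : ∀ c ∈ { c | ∃ Q : Polynomial ℝ, Q.Monic ∧ Q.natDegree = n ∧
      c = Lp p 0 1 (fun x => Q.eval x) }, (2 * Real.exp 1) ^ (-(n:ℤ)) ≤ c := by
    rintro c ⟨Q, hQ, hd, rfl⟩
    have := Lp_lower n hn p hp _ (poly_isDn n hn Q) (by rw [poly_mIoo n Q hQ hd]; exact hF)
    rw [poly_mIoo n Q hQ hd, div_self hF.ne', one_mul] at this
    rw [zpow_neg, zpow_natCast]
    exact this
  have hmem2 : (2:ℝ) ^ (-(n:ℤ)) * (1 + n * p) ^ (-(1 / p)) ∈ { c | ∃ Q : Polynomial ℝ, Q.Monic ∧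
      Q.natDegree = n ∧ c = Lp p 0 1 (fun x => Q.eval x) } :=
    ⟨_, hmonic, hdeg, (Lp_half n p hp).symm⟩
  exact ⟨⟨le_csSup ⟨_, hup⟩ hmem, csSup_le ⟨_, hmem⟩ hup⟩,
    le_csInf ⟨_, hmem2⟩ hlo, csInf_le ⟨_, hlo⟩ hmem2⟩
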